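/- Let p and q be distinct prime numbers, n = p·q, and λ = lcm(p−1, q−1). Let s be a finite index set, m : s → ℕ a family of messages, and r : s → ℕ a family of numbers each coprime to n. Then ( ∏_{i ∈ s} ( (1+n)^{m i} · (r i)^n ) )^λ ≡ 1 + (∑_{i ∈ s} m i)·λ·n (mod n²). (This is the end-to-end correctness of the MAB verification layer: homomorphically combining the Paillier ciphertexts of the individual amounts and then decrypting with λ recovers the total amount ∑ m_i.) -/

import Mathlib

/-!
Raising to the power `n` lifts a congruence from modulus `n` to modulus `n ^ 2`, so the blinding
factor `r ^ n` dies under any exponent that kills `r` modulo `n`. What survives is a power of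
`1 + n`, which is linear in its exponent modulo `n ^ 2`. Encryption is a homomorphism, so a product
of ciphertexts is decrypted as the single ciphertext of the sum. For `n = p * q` the exponent
`lcm (p - 1) (q - 1)` is the value of the Carmichael function, which kills every unit modulo `n`.
-/

open ArithmeticFunction (carmichael)

theorem add_pow_modEq_sq (a b k : ℕ) :
    (a + b) ^ k ≡ a ^ k + k * a ^ (k - 1) * b [MOD b ^ 2] := by
  obtain ⟨c, hc⟩ := Polynomial.powAddExpansion a b k
  rw [hc]
  simp [Nat.ModEq]

theorem pow_pow_modEq_pow_succ {a b n : ℕ} (h : a ≡ b [MOD n]) (k : ℕ) :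
    a ^ n ^ k ≡ b ^ n ^ k [MOD n ^ (k + 1)] := by
  have hdvd : (n : ℤ) ∣ (b : ℤ) - a := Nat.modEq_iff_dvd.mp h
  exact Nat.modEq_iff_dvd.mpr (mod_cast dvd_sub_pow_of_dvd_sub hdvd k)

theorem carmichael_prime {p : ℕ} (hp : p.Prime) : carmichael p = p - 1 := by
  have : Fact p.Prime := ⟨hp⟩
  rw [ArithmeticFunction.carmichael_eq_exponent', IsCyclic.exponent_eq_card,
    Nat.card_eq_fintype_card, ZMod.card_units]

theorem carmichael_mul_of_primes_ne {p q : ℕ} (hp : p.Prime) (hq : q.Prime) (hpq : p ≠ q) :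
    carmichael (p * q) = Nat.lcm (p - 1) (q - 1) := by
  rw [ArithmeticFunction.carmichael_mul ((Nat.coprime_primes hp hq).mpr hpq),
    carmichael_prime hp, carmichael_prime hq]

theorem pow_carmichael_modEq_one {a n : ℕ} (ha : a.Coprime n) :
    a ^ carmichael n ≡ 1 [MOD n] := by
  have hunit := congrArg Units.val
    (ArithmeticFunction.pow_carmichael (ZMod.unitOfCoprime a ha))
  rw [Units.val_pow_eq_pow_val, ZMod.coe_unitOfCoprime, Units.val_one] at hunit
  exact (ZMod.natCast_eq_natCast_iff _ _ _).mp (mod_cast hunit)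

/-- The Paillier ciphertext, with generator `1 + n`, of the message `m` blinded by `r`, as a
representative in `ℕ` of its class modulo `n ^ 2`. -/
def paillierEncrypt (n m r : ℕ) : ℕ :=
  (1 + n) ^ m * r ^ n

theorem prod_paillierEncrypt {ι : Type*} (n : ℕ) (s : Finset ι) (m r : ι → ℕ) :
    ∏ i ∈ s, paillierEncrypt n (m i) (r i) =
      paillierEncrypt n (∑ i ∈ s, m i) (∏ i ∈ s, r i) := by
  simp only [paillierEncrypt, Finset.prod_mul_distrib, Finset.prod_pow_eq_pow_sum,
    Finset.prod_pow]

theorem paillierEncrypt_pow_modEq {n r lam : ℕ} (m : ℕ) (hr : r ^ lam ≡ 1 [MOD n]) :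
    paillierEncrypt n m r ^ lam ≡ 1 + m * lam * n [MOD n ^ 2] := by
  have hmessage : (1 + n) ^ (m * lam) ≡ 1 + m * lam * n [MOD n ^ 2] := by
    simpa using add_pow_modEq_sq 1 n (m * lam)
  have hblinding : (r ^ lam) ^ n ≡ 1 [MOD n ^ 2] := by
    simpa using pow_pow_modEq_pow_succ hr 1
  calc paillierEncrypt n m r ^ lam
      = (1 + n) ^ (m * lam) * (r ^ lam) ^ n := by
        rw [paillierEncrypt, mul_pow, ← pow_mul, pow_right_comm]
    _ ≡ (1 + m * lam * n) * 1 [MOD n ^ 2] := hmessage.mul hblinding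
    _ = 1 + m * lam * n := mul_one _

theorem mab_verification_correct_general {n lam : ℕ} {ι : Type*} (s : Finset ι) (m r : ι → ℕ)
    (hr : ∀ i ∈ s, r i ^ lam ≡ 1 [MOD n]) :
    (∏ i ∈ s, paillierEncrypt n (m i) (r i)) ^ lam ≡
      1 + (∑ i ∈ s, m i) * lam * n [MOD n ^ 2] := by
  have hprod : (∏ i ∈ s, r i) ^ lam ≡ 1 [MOD n] := by
    rw [← Finset.prod_pow]
    exact Nat.ModEq.prod_one hr
  rw [prod_paillierEncrypt]
  exact paillierEncrypt_pow_modEq _ hprod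

/-- End-to-end correctness of the MAB verification layer: multiplying the
Paillier ciphertexts `(1+n)^{m i} · (r i)^n` and raising the product to the
secret exponent `λ = lcm(p−1, q−1)` yields `1 + (∑ m i)·λ·n` modulo `n²`. -/
theorem mab_verification_correct (p q : ℕ) (hp : p.Prime) (hq : q.Prime)
    (hpq : p ≠ q) (n : ℕ) (hn : n = p * q)
    (lam : ℕ) (hlam : lam = Nat.lcm (p - 1) (q - 1))
    {ι : Type*} (s : Finset ι) (m : ι → ℕ) (r : ι → ℕ)
    (hr : ∀ i ∈ s, Nat.Coprime (r i) n) :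
    (∏ i ∈ s, ((1 + n) ^ m i * r i ^ n)) ^ lam ≡
      1 + (∑ i ∈ s, m i) * lam * n [MOD n ^ 2] := by
  have hcarmichael : carmichael n = lam := by rw [hn, hlam, carmichael_mul_of_primes_ne hp hq hpq]
  exact mab_verification_correct_general s m r fun i hi =>
    hcarmichael ▸ pow_carmichael_modEq_one (hr i hi)
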